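/- Let d, n, s be positive integers with gcd(s,n)=1 and d ≥ 3, and suppose n ≤ d(d−1) and d divides n. Then for a, b ∈ F_{q^n}, the F_q-dimension of the kernel of a·x + b·x^σ − x^{σ^d} equals d if and only if b = 0 and N_{q^n/q^d}(a) = 1, where N_{q^n/q^d}(a) = a^{(q^n−1)/(q^d−1)} is the norm from F_{q^n} to the subfield F_{q^d}. -/

import Mathlib

lemma aux_fix (q : ℕ) (K L : Type*) [Field K] [Field L] [Fintype K] [Fintype L] [Algebra K L]
    (hcardK : Fintype.card K = q)
    (n : ℕ) (hn : 0 < n) (hcardL : Fintype.card L = q ^ n)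
    (s : ℕ) (hsn : Nat.gcd s n = 1) (x : L) (hx : x ^ q ^ s = x) :
    ∃ k : K, algebraMap K L k = x := by
  classical
  have hq1 : 1 < q := hcardK ▸ Fintype.one_lt_card
  have hxq : x ^ q = x := by
    by_cases h0 : x = 0
    · subst h0; exact zero_pow (by omega)
    have h1 : x ^ (q ^ s - 1) = 1 := by
      apply mul_right_cancel₀ h0
      rw [← pow_succ, Nat.sub_add_cancel (Nat.one_le_pow _ _ (by omega)), hx, one_mul]
    have h2 : x ^ (q ^ n - 1) = 1 := by
      rw [← hcardL]; exact FiniteField.pow_card_sub_one_eq_one x h0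
    have h3 : x ^ (q - 1) = 1 := by
      have := Nat.pow_sub_one_gcd_pow_sub_one q s n
      rw [hsn, pow_one] at this
      rw [← this, pow_gcd_eq_one]
      exact ⟨h1, h2⟩
    calc x ^ q = x ^ (q - 1 + 1) := by rw [Nat.sub_add_cancel hq1.le]
      _ = x := by rw [pow_succ, h3, one_mul]
  set P : Polynomial L := Polynomial.X ^ q - Polynomial.X with hP
  have hP0 : P ≠ 0 := FiniteField.X_pow_card_sub_X_ne_zero L hq1
  have hsub : Finset.univ.image (algebraMap K L) ⊆ P.roots.toFinset := by
    intro y hy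
    obtain ⟨k, -, rfl⟩ := Finset.mem_image.1 hy
    rw [Multiset.mem_toFinset, Polynomial.mem_roots hP0, Polynomial.IsRoot.def, hP,
      Polynomial.eval_sub, Polynomial.eval_pow, Polynomial.eval_X]
    rw [← map_pow, ← hcardK, FiniteField.pow_card, sub_self]
  have heq : Finset.univ.image (algebraMap K L) = P.roots.toFinset := by
    apply Finset.eq_of_subset_of_card_le hsub
    rw [Finset.card_image_of_injective _ (algebraMap K L).injective, Finset.card_univ, hcardK]
    calc _ ≤ P.roots.card := Multiset.toFinset_card_le _
      _ ≤ P.natDegree := Polynomial.card_roots' P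
      _ = q := FiniteField.X_pow_card_sub_X_natDegree_eq L hq1
  have : x ∈ P.roots.toFinset := by
    rw [Multiset.mem_toFinset, Polynomial.mem_roots hP0, Polynomial.IsRoot.def, hP,
      Polynomial.eval_sub, Polynomial.eval_pow, Polynomial.eval_X, hxq, sub_self]
  rw [← heq] at this
  obtain ⟨k, -, hk⟩ := Finset.mem_image.1 this
  exact ⟨k, hk⟩

lemma aux_dim {K L : Type*} [Field K] [Field L] [Fintype K] [Fintype L] [Algebra K L]
    (σ : L ≃ₐ[K] L) (hfix : ∀ x : L, σ x = x → ∃ k : K, algebraMap K L k = x) :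
    ∀ (k : ℕ) (c : ℕ → L) (_ : c k ≠ 0) (W : Submodule K L)
      (_ : ∀ x ∈ W, ∑ j ∈ Finset.range (k + 1), c j * (σ ^ j) x = 0),
      Module.finrank K W ≤ k := by
  intro k
  induction k with
  | zero =>
    intro c hc W hW
    have : W = ⊥ := by
      rw [eq_bot_iff]
      intro x hx
      have := hW x hx
      simpa [hc] using this
    simp [this]
  | succ k ih =>
    intro c hc W hW
    by_cases hbot : W = ⊥
    · rw [hbot, finrank_bot]; exact Nat.zero_le _
    obtain ⟨w, hwW, hw⟩ := Submodule.exists_mem_ne_zero_of_ne_bot hbot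
    let c' : ℕ → L := fun j => c j * (σ ^ j) w
    let e : ℕ → L := fun i => ∑ j ∈ Finset.range (k + 2), if i < j then c' j else 0
    let D : W →ₗ[K] L := (σ.toLinearMap - LinearMap.id) ∘ₗ (LinearMap.mulLeft K w⁻¹) ∘ₗ W.subtype
    have hD : ∀ x : W, D x = σ (w⁻¹ * x) - w⁻¹ * x := fun x => rfl
    have he : e k ≠ 0 := by
      have : e k = c' (k + 1) := by
        simp only [e]
        rw [Finset.sum_eq_single (k + 1)]
        · simp
        · intro j hj hne
          rw [if_neg]
          have := Finset.mem_range.1 hj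
          omega
        · simp
      rw [this]
      exact mul_ne_zero hc ((map_ne_zero_iff _ (σ ^ (k + 1)).injective).2 hw)
    have hsum0 : ∑ j ∈ Finset.range (k + 2), c' j = 0 := hW w hwW
    have hrange : Module.finrank K (LinearMap.range D) ≤ k := by
      apply ih e he
      rintro _ ⟨x, rfl⟩
      rw [hD]
      set y : L := w⁻¹ * x with hy
      have hxy : (x : L) = w * y := by rw [hy]; field_simp
      have h1 : ∑ j ∈ Finset.range (k + 2), c' j * (σ ^ j) y = 0 := by
        have := hW x x.2
        rw [hxy] at this
        rw [← this]
        apply Finset.sum_congr rfl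
        intro j _
        simp only [c', map_mul]; ring
      have htel : ∀ j, (σ ^ j) y - y = ∑ i ∈ Finset.range j, (σ ^ i) (σ y - y) := by
        intro j
        have := Finset.sum_range_sub (fun i => (σ ^ i) y) j
        simp only [pow_zero, AlgEquiv.one_apply] at this
        rw [← this]
        apply Finset.sum_congr rfl
        intro i _
        rw [map_sub, pow_succ, AlgEquiv.mul_apply]
      have h2 : ∑ j ∈ Finset.range (k + 2), c' j * ((σ ^ j) y - y) = 0 := by
        simp only [mul_sub, Finset.sum_sub_distrib]
        rw [h1, ← Finset.sum_mul, hsum0]; simp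
      rw [← h2]
      simp only [e, Finset.sum_mul]
      rw [Finset.sum_comm]
      apply Finset.sum_congr rfl
      intro j hj
      rw [htel, Finset.mul_sum]
      have hsub : Finset.range j ⊆ Finset.range (k + 1) := by
        have := Finset.mem_range.1 hj
        intro i hi
        have := Finset.mem_range.1 hi
        exact Finset.mem_range.2 (by omega)
      rw [← Finset.sum_subset hsub]
      · apply Finset.sum_congr rfl
        intro i hi
        rw [if_pos (Finset.mem_range.1 hi)]
      · intro i _ hi
        rw [if_neg (by simpa using hi), zero_mul]
    have hker : Module.finrank K (LinearMap.ker D) ≤ 1 := by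
      apply finrank_le_one (⟨⟨w, hwW⟩, by rw [LinearMap.mem_ker, hD]; simp [hw]⟩ : LinearMap.ker D)
      rintro ⟨x, hx⟩
      rw [LinearMap.mem_ker, hD, sub_eq_zero] at hx
      obtain ⟨t, ht⟩ := hfix _ hx
      refine ⟨t, ?_⟩
      ext
      simp only [SetLike.mk_smul_mk, Algebra.smul_def, ht]
      field_simp
    have := LinearMap.finrank_range_add_finrank_ker D
    omega

lemma aux_pow {K L : Type*} [Field K] [Field L] [Algebra K L]
    (σ : L ≃ₐ[K] L) (d : ℕ) (a b : L) (hb : b ≠ 0) (W : Submodule K L)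
    (hW : ∀ x ∈ W, (σ ^ d) x = a * x + b * σ x) (i : ℕ) :
    ∃ c : ℕ → L, c i ≠ 0 ∧ (∀ j, i < j → c j = 0) ∧
      ∀ x ∈ W, (σ ^ (d * i)) x = ∑ j ∈ Finset.range (i + 1), c j * (σ ^ j) x := by
  induction i with
  | zero => exact ⟨fun j => if j = 0 then 1 else 0, by simp, by intro j hj; simp; omega, by simp⟩
  | succ i ih =>
    obtain ⟨c, hc, hc0, h⟩ := ih
    refine ⟨fun j => (σ ^ d) (c j) * (σ ^ j) a +
      (if j = 0 then 0 else (σ ^ d) (c (j - 1)) * (σ ^ (j - 1)) b), ?_, ?_, ?_⟩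
    · simp only [hc0 (i + 1) (by omega), map_zero, zero_mul, zero_add, Nat.succ_ne_zero, if_false,
        Nat.add_sub_cancel]
      exact mul_ne_zero ((map_ne_zero_iff _ (σ ^ d).injective).2 hc)
        ((map_ne_zero_iff _ (σ ^ i).injective).2 hb)
    · intro j hj
      simp [hc0 j (by omega), hc0 (j - 1) (by omega)]
    · intro x hx
      have h1 : (σ ^ (d * (i + 1))) x = (σ ^ d) ((σ ^ (d * i)) x) := by
        rw [← AlgEquiv.mul_apply, ← pow_add]; congr 2; ring
      rw [h1, h x hx, map_sum]
      simp only [add_mul, Finset.sum_add_distrib]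
      rw [Finset.sum_range_succ (fun j => (σ ^ d) (c j) * (σ ^ j) a * (σ ^ j) x),
        Finset.sum_range_succ' _ (i + 1)]
      simp only [hc0 (i + 1) (by omega), map_zero, zero_mul, add_zero, if_true,
        Nat.add_sub_cancel, Nat.succ_ne_zero, if_false]
      rw [← Finset.sum_add_distrib]
      apply Finset.sum_congr rfl
      intro j _
      have h2 : (σ ^ d) ((σ ^ j) x) = (σ ^ j) ((σ ^ d) x) := by
        rw [← AlgEquiv.mul_apply, ← AlgEquiv.mul_apply, ← pow_add, ← pow_add, add_comm]
      rw [map_mul, h2, hW x hx, map_add, map_mul, map_mul, pow_succ, AlgEquiv.mul_apply]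
      ring


/-- With `σ : x ↦ x^{q^s}`, `gcd(s,n)=1`, `d ≥ 3`, `n ≤ d(d-1)` and `d ∣ n`:
the `F_q`-dimension of the kernel of `x ↦ a·x + b·σ(x) − σ^d(x)` equals `d` if and only if
`b = 0` and `N_{q^n/q^d}(a) = a^{(q^n-1)/(q^d-1)} = 1`. -/
theorem stmt_1 (p q : ℕ) (hp : p.Prime) (hq : ∃ m : ℕ, 0 < m ∧ q = p ^ m)
    (K L : Type*) [Field K] [Field L] [Fintype K] [Fintype L] [Algebra K L]
    (hcardK : Fintype.card K = q)
    (n : ℕ) (hn : 0 < n) (hcardL : Fintype.card L = q ^ n)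
    (s : ℕ) (hs : 0 < s) (hsn : Nat.gcd s n = 1)
    (σ : L ≃ₐ[K] L) (hσ : ∀ x : L, σ x = x ^ q ^ s)
    (d : ℕ) (hd : 3 ≤ d) (hnd : n ≤ d * (d - 1)) (hdvd : d ∣ n)
    (a b : L) :
    Module.finrank K
      (LinearMap.ker
        (LinearMap.mulLeft K a + LinearMap.mulLeft K b ∘ₗ σ.toLinearMap
          - (σ ^ d : L ≃ₐ[K] L).toLinearMap)) = d
      ↔ b = 0 ∧ a ^ ((q ^ n - 1) / (q ^ d - 1)) = 1 := by

  classical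
  have hq1 : 1 < q := hcardK ▸ Fintype.one_lt_card
  have hfix : ∀ x : L, σ x = x → ∃ k : K, algebraMap K L k = x := by
    intro x hx
    rw [hσ] at hx
    exact aux_fix q K L hcardK n hn hcardL s hsn x hx
  have hσp : ∀ (i : ℕ) (x : L), (σ ^ i) x = x ^ q ^ (s * i) := by
    intro i
    induction i with
    | zero => intro x; simp
    | succ i ih =>
      intro x
      rw [pow_succ, AlgEquiv.mul_apply, ih, hσ, ← pow_mul, ← pow_add]
      congr 2; ring
  have hσn : ∀ x : L, (σ ^ n) x = x := by
    intro x
    rw [hσp, mul_comm, pow_mul, ← hcardL, FiniteField.pow_card_pow]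
  set V := LinearMap.ker
        (LinearMap.mulLeft K a + LinearMap.mulLeft K b ∘ₗ σ.toLinearMap
          - (σ ^ d : L ≃ₐ[K] L).toLinearMap) with hV
  have hmem : ∀ x, x ∈ V ↔ (σ ^ d) x = a * x + b * σ x := by
    intro x
    rw [hV, LinearMap.mem_ker]
    simp only [LinearMap.sub_apply, LinearMap.add_apply, LinearMap.comp_apply,
      LinearMap.mulLeft_apply, AlgEquiv.toLinearMap_apply]
    rw [sub_eq_zero, eq_comm]
  obtain ⟨m, hm⟩ := hdvd
  have hm0 : 0 < m := by
    rcases Nat.eq_zero_or_pos m with h | h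
    · subst h; omega
    · exact h
  have hmd : m ≤ d - 1 := by
    rw [hm] at hnd
    exact Nat.le_of_mul_le_mul_left hnd (by omega)
  -- arithmetic
  have hqd : 1 < q ^ d := Nat.one_lt_pow (by omega) hq1
  have hqsd : 1 ≤ q ^ (s * d) := Nat.one_le_pow _ _ (by omega)
  set g := q ^ d - 1 with hg
  set E := q ^ (s * d) - 1 with hE
  set N := q ^ n - 1 with hN
  have hgpos : 0 < g := by omega
  have hgcd : Nat.gcd N E = g := by
    rw [hN, hE, hg, Nat.pow_sub_one_gcd_pow_sub_one, hm]
    congr 2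
    have hsm : Nat.gcd m s = 1 := by
      have : Nat.Coprime s (d * m) := by rw [← hm]; exact hsn
      exact (Nat.Coprime.coprime_mul_left_right this).symm
    rw [mul_comm d m, Nat.gcd_mul_right, hsm, one_mul]
  have hgN : g ∣ N := hgcd ▸ Nat.gcd_dvd_left N E
  have hgE : g ∣ E := hgcd ▸ Nat.gcd_dvd_right N E
  have hcardU : Nat.card Lˣ = N := by
    rw [Nat.card_eq_fintype_card, Fintype.card_units, hcardL]
  have hpE : ∀ x : L, x ^ q ^ (s * d) = x ^ E * x := by
    intro x
    rw [← pow_succ, hE, Nat.sub_add_cancel hqsd]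
  constructor
  · intro hdim
    have hb : b = 0 := by
      by_contra hb
      obtain ⟨c, hc, -, h⟩ := aux_pow σ d a b hb V (fun x hx => (hmem x).1 hx) m
      have := aux_dim σ hfix m (fun j => if j = 0 then c 0 - 1 else c j)
        (by simpa [hm0.ne'] using hc) V (by
          intro x hx
          have h1 := h x hx
          rw [← hm, hσn, Finset.sum_range_succ'] at h1
          rw [Finset.sum_range_succ']
          simp only [Nat.succ_ne_zero, if_false, if_true]
          simp only [pow_zero, AlgEquiv.one_apply] at h1 ⊢
          linear_combination -h1)
      omega
    refine ⟨hb, ?_⟩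
    have hne : V ≠ ⊥ := by
      intro h
      rw [h] at hdim
      simp at hdim
      omega
    obtain ⟨x, hxV, hx⟩ := Submodule.exists_mem_ne_zero_of_ne_bot hne
    have h1 := (hmem x).1 hxV
    rw [hb, zero_mul, add_zero, hσp, hpE] at h1
    have h2 := mul_right_cancel₀ hx h1
    obtain ⟨t, ht⟩ := hgE
    rw [← h2, ht, ← pow_mul]
    have : g * t * (N / g) = N * t := by
      rw [mul_right_comm, Nat.mul_div_cancel' hgN]
    rw [this, pow_mul, hN, ← hcardL, FiniteField.pow_card_sub_one_eq_one x hx, one_pow]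
  · rintro ⟨hb, ha⟩
    have hMpos : 0 < N / g := Nat.div_pos (Nat.le_of_dvd (by
      have : 1 < q ^ n := Nat.one_lt_pow hn.ne' hq1
      omega) hgN) hgpos
    have ha0 : a ≠ 0 := by
      rintro rfl
      rw [zero_pow hMpos.ne'] at ha
      exact zero_ne_one ha
    apply le_antisymm
    · apply aux_dim σ hfix d (fun j => if j = 0 then a else if j = d then -1 else 0)
      · have hd0 : d ≠ 0 := by omega
        simp [hd0]
      · intro x hx
        have h1 := (hmem x).1 hx
        obtain ⟨d', rfl⟩ : ∃ d', d = d' + 1 := ⟨d - 1, by omega⟩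
        rw [Finset.sum_range_succ, Finset.sum_range_succ', Finset.sum_eq_zero]
        · simp [h1, hb]
        · intro j hj
          have := Finset.mem_range.1 hj
          simp only [Nat.succ_ne_zero, if_false]
          rw [if_neg (by omega), zero_mul]
    · have hle : (powMonoidHom E : Lˣ →* Lˣ).range ≤ (powMonoidHom (N / g) : Lˣ →* Lˣ).ker := by
        rintro _ ⟨y, rfl⟩
        rw [MonoidHom.mem_ker, powMonoidHom_apply, powMonoidHom_apply, ← pow_mul]
        obtain ⟨t, ht⟩ := hgE
        have : E * (N / g) = N * t := by
          rw [ht, mul_right_comm, Nat.mul_div_cancel' hgN]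
        rw [this, pow_mul, ← hcardU, pow_card_eq_one', one_pow]
      have heq := Subgroup.eq_of_le_of_card_ge hle (by
        rw [IsCyclic.card_powMonoidHom_range, IsCyclic.card_powMonoidHom_ker, hcardU, hgcd,
          Nat.gcd_eq_right (Nat.div_dvd_of_dvd hgN)])
      have haU : Units.mk0 a ha0 ∈ (powMonoidHom E : Lˣ →* Lˣ).range := by
        rw [heq, MonoidHom.mem_ker, powMonoidHom_apply]
        ext
        simpa using ha
      obtain ⟨y, hy⟩ := haU
      have hya : (y : L) ^ E = a := by
        have := congrArg (Units.val) hy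
        simpa using this
      let F : Option (powMonoidHom E : Lˣ →* Lˣ).ker → V := fun o => match o with
        | none => 0
        | some u => ⟨y * (u : Lˣ), by
            rw [hmem, hσp, hpE, hb, zero_mul, add_zero, mul_pow, hya]
            have : ((u : Lˣ) : L) ^ E = 1 := by
              have := u.2
              rw [MonoidHom.mem_ker, powMonoidHom_apply] at this
              rw [← Units.val_pow_eq_pow_val, this, Units.val_one]
            rw [this, mul_one]⟩
      have hF : Function.Injective F := by
        intro o1 o2 h
        rcases o1 with _ | u <;> rcases o2 with _ | v
        · rfl
        · have := congrArg Subtype.val h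
          simp [F] at this
        · have := congrArg Subtype.val h
          simp [F] at this
        · have := congrArg Subtype.val h
          simp only [F] at this
          have := mul_left_cancel₀ y.ne_zero this
          congr 1
          exact Subtype.ext (Units.ext this)
      have hcard := Nat.card_le_card_of_injective F hF
      rw [Finite.card_option, IsCyclic.card_powMonoidHom_ker, hcardU, hgcd,
        Module.natCard_eq_pow_finrank (K := K) (V := V), Nat.card_eq_fintype_card, hcardK, hg,
        Nat.sub_add_cancel hqd.le] at hcard
      exact (Nat.pow_le_pow_iff_right hq1).1 hcard
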